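/- Unisolvency of the second enriched triple: let v₁, v₂, v₃ ∈ ℝ² be affinely independent with barycentric coordinates λᵢ, let γⱼ(t) = ((1+t)/2) v_{j+1} + ((1-t)/2) v_{j+2} (indices modulo 3), and fix μ ≥ 1, σ > 0. Define, for f : ℝ² → ℝ, D_j(f) = ∫_{-1}^{1} f(γⱼ(t)) g̃_{σ,μ}(t) dt and S_j(f) = ∫_{-1}^{1} q_{σ,μ}(t) f(γⱼ(t)) g̃_{σ,μ}(t) dt, j = 1,2,3. If p₂ = Σᵢ₌₁³ aᵢ λᵢ + Σᵢ₌₁³ bᵢ λᵢ² with real coefficients aᵢ, bᵢ satisfies D_j(p₂) = 0 and S_j(p₂) = 0 for j = 1,2,3, then a₁ = a₂ = a₃ = b₁ = b₂ = b₃ = 0, and hence p₂ is the zero function. -/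

import Mathlib

open MeasureTheory

/-- Lower incomplete gamma function `γ(s,z) = ∫₀^z u^(s-1) e^(-u) du`. -/
noncomputable def lowGamma (s z : ℝ) : ℝ := ∫ u in (0:ℝ)..z, u ^ (s - 1) * Real.exp (-u)

/-- Modified lower incomplete gamma function `γ^mod(s,z) = γ(s,z)/z^s`. -/
noncomputable def gammaMod (s z : ℝ) : ℝ := lowGamma s z / z ^ s

/-- Second family of densities `g̃_{σ,μ}` on `[-1,1]`. -/
noncomputable def gTilde (σ μ t : ℝ) : ℝ :=
  ((2 * μ - 1) / gammaMod (1 / 2) (1 / (2 * σ ^ (4 * μ - 2)))) *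
    (t ^ 2) ^ (μ - 1) * Real.exp (-(1 / 2) * (t ^ 2 / σ ^ 2) ^ (2 * μ - 1))

/-- Second moment `s_{2,σ,μ}` of `g̃_{σ,μ}`. -/
noncomputable def sMom2 (σ μ : ℝ) : ℝ := ∫ t in (-1:ℝ)..1, t ^ 2 * gTilde σ μ t

/-- The orthogonal quadratic polynomial `q_{σ,μ}(t) = t² - s_{2,σ,μ}`. -/
noncomputable def qPoly (σ μ t : ℝ) : ℝ := t ^ 2 - sMom2 σ μ

/-- Parametrization of the edge `s_j` of the triangle, opposite to the vertex `v j`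
(indices taken cyclically in `Fin 3`). -/
noncomputable def edgeParam (v : Fin 3 → ℝ × ℝ) (j : Fin 3) (t : ℝ) : ℝ × ℝ :=
  ((1 + t) / 2) • v (j + 1) + ((1 - t) / 2) • v (j + 2)

/-!
On an edge, `p₂` is a quadratic polynomial `α + ε t + β t²` in the parameter. By evenness of the
weight, the vanishing of `D` and `S` on this edge says that `α + β t²` is orthogonal to `1` and to
`t²`, hence to itself, so `α = β = 0`. In terms of the coefficients, `aᵢ + aⱼ = 0` and
`bᵢ + bⱼ = 0` for every edge `ij`, and the three edges of a triangle form an odd cycle.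
-/

section WeightedIntegrals

open Set

theorem intervalIntegral_eq_zero_of_odd {E : Type*} [NormedAddCommGroup E] [NormedSpace ℝ E]
    {f : ℝ → E} (hf : f.Odd) (r : ℝ) : ∫ t in (-r)..r, f t = 0 := by
  have h : ∫ t in (-r)..r, f (-t) = ∫ t in (-r)..r, f t := by simp
  simp only [hf.eq, intervalIntegral.integral_neg] at h
  have : IsAddTorsionFree E := .of_isTorsionFree ℝ E
  exact self_eq_neg.mp h.symm

theorem eqOn_zero_of_integral_mul_eq_zero {a b : ℝ} (hab : a < b) {f w : ℝ → ℝ}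
    (hf : ContinuousOn f (Icc a b)) (hf_nonneg : ∀ t ∈ Icc a b, 0 ≤ f t)
    (hw : IntervalIntegrable w volume a b) (hw_pos : ∀ᵐ t, t ∈ Icc a b → 0 < w t)
    (hfw : ∫ t in a..b, f t * w t = 0) : EqOn f 0 (Icc a b) := by
  have hint : IntegrableOn (fun t ↦ f t * w t) (Icc a b) :=
    (intervalIntegrable_iff_integrableOn_Icc_of_le hab.le).mp
      (hw.continuousOn_mul (by rwa [uIcc_of_le hab.le]))
  have hpos : ∀ᵐ t ∂volume.restrict (Icc a b), 0 < w t :=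
    (ae_restrict_iff' measurableSet_Icc).mpr hw_pos
  have hnonneg : ∀ᵐ t ∂volume.restrict (Icc a b), 0 ≤ f t * w t := by
    filter_upwards [hpos, ae_restrict_mem measurableSet_Icc] with t hwt ht
    exact mul_nonneg (hf_nonneg t ht) hwt.le
  rw [intervalIntegral.integral_of_le hab.le, ← integral_Icc_eq_integral_Ioc,
    integral_eq_zero_iff_of_nonneg_ae hnonneg hint] at hfw
  have hf_zero : f =ᵐ[volume.restrict (Icc a b)] 0 := by
    filter_upwards [hfw, hpos] with t hfwt hwt
    exact (mul_eq_zero.mp hfwt).resolve_right hwt.ne'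
  exact Measure.eqOn_Icc_of_ae_eq volume hab.ne hf_zero hf continuousOn_const

variable {r c α β ε : ℝ} {w : ℝ → ℝ}

theorem integral_sq_even_part_mul_eq_zero (hw : IntervalIntegrable w volume (-r) r)
    (hw_even : w.Even)
    (h₀ : ∫ t in (-r)..r, (α + ε * t + β * t ^ 2) * w t = 0)
    (h₂ : ∫ t in (-r)..r, (t ^ 2 - c) * (α + ε * t + β * t ^ 2) * w t = 0) :
    ∫ t in (-r)..r, (α + β * t ^ 2) ^ 2 * w t = 0 := by
  have hodd : ∫ t in (-r)..r, (α + β * t ^ 2) * (ε * t) * w t = 0 :=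
    intervalIntegral_eq_zero_of_odd (fun t ↦ by rw [hw_even.eq]; ring) r
  have integrable_mul {f : ℝ → ℝ} (hf : Continuous f) :
      IntervalIntegrable (fun t ↦ f t * w t) volume (-r) r := hw.continuousOn_mul hf.continuousOn
  -- `α + β t² = (α + β c) + β (t² - c)`, so testing against the even part uses only `h₀` and `h₂`.
  calc
    ∫ t in (-r)..r, (α + β * t ^ 2) ^ 2 * w t
      = ∫ t in (-r)..r, ((α + β * c) * ((α + ε * t + β * t ^ 2) * w t)
          + β * ((t ^ 2 - c) * (α + ε * t + β * t ^ 2) * w t)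
          - (α + β * t ^ 2) * (ε * t) * w t) := by
        congr with t; ring
    _ = (α + β * c) * (∫ t in (-r)..r, (α + ε * t + β * t ^ 2) * w t)
          + β * (∫ t in (-r)..r, (t ^ 2 - c) * (α + ε * t + β * t ^ 2) * w t)
          - ∫ t in (-r)..r, (α + β * t ^ 2) * (ε * t) * w t := by
        rw [intervalIntegral.integral_sub
            (((integrable_mul (by fun_prop)).const_mul _).add
              ((integrable_mul (by fun_prop)).const_mul _)) (integrable_mul (by fun_prop)),
          intervalIntegral.integral_add ((integrable_mul (by fun_prop)).const_mul _)
            ((integrable_mul (by fun_prop)).const_mul _),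
          intervalIntegral.integral_const_mul, intervalIntegral.integral_const_mul]
    _ = 0 := by rw [h₀, h₂, hodd]; ring

theorem even_coeffs_eq_zero_of_integrals_eq_zero (hr : 0 < r)
    (hw : IntervalIntegrable w volume (-r) r) (hw_even : w.Even)
    (hw_pos : ∀ᵐ t, t ∈ Icc (-r) r → 0 < w t)
    (h₀ : ∫ t in (-r)..r, (α + ε * t + β * t ^ 2) * w t = 0)
    (h₂ : ∫ t in (-r)..r, (t ^ 2 - c) * (α + ε * t + β * t ^ 2) * w t = 0) :
    α = 0 ∧ β = 0 := by
  have hzero : EqOn (fun t ↦ (α + β * t ^ 2) ^ 2) 0 (Icc (-r) r) :=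
    eqOn_zero_of_integral_mul_eq_zero (by linarith) (by fun_prop) (fun t _ ↦ sq_nonneg _)
      hw hw_pos (integral_sq_even_part_mul_eq_zero hw hw_even h₀ h₂)
  have hα : α = 0 := by simpa using hzero (x := 0) ⟨by linarith, hr.le⟩
  have hβ : β = 0 := by simpa [hα, hr.ne'] using hzero (x := r) ⟨by linarith, le_rfl⟩
  exact ⟨hα, hβ⟩

end WeightedIntegrals

section Density

variable {σ μ s z t : ℝ}

theorem lowGamma_pos (hs : 0 < s) (hz : 0 < z) : 0 < lowGamma s z := by
  refine intervalIntegral.intervalIntegral_pos_of_pos_on ?_ (fun u hu ↦ ?_) hz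
  · exact (intervalIntegral.intervalIntegrable_rpow' (by linarith)).mul_continuousOn (by fun_prop)
  · have := Real.rpow_pos_of_pos hu.1 (s - 1)
    positivity

theorem gammaMod_pos (hs : 0 < s) (hz : 0 < z) : 0 < gammaMod s z :=
  div_pos (lowGamma_pos hs hz) (Real.rpow_pos_of_pos hz s)

theorem gTilde_pos (hσ : 0 < σ) (hμ : 1 / 2 < μ) (ht : t ≠ 0) : 0 < gTilde σ μ t := by
  have hγ : 0 < gammaMod (1 / 2) (1 / (2 * σ ^ (4 * μ - 2))) :=
    gammaMod_pos (by norm_num) (by positivity)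
  have hμ' : 0 < 2 * μ - 1 := by linarith
  unfold gTilde
  positivity

theorem gTilde_even : (gTilde σ μ).Even := fun t ↦ by simp [gTilde]

theorem intervalIntegrable_gTilde (hμ : 1 / 2 < μ) (a b : ℝ) :
    IntervalIntegrable (gTilde σ μ) volume a b := by
  refine intervalIntegrable_of_even (fun t ↦ (gTilde_even t).symm) fun x hx ↦ ?_
  have hpow : IntervalIntegrable (fun t : ℝ ↦ (t ^ 2) ^ (μ - 1)) volume 0 x := by
    refine (intervalIntegral.intervalIntegrable_rpow' (r := 2 * (μ - 1)) (by linarith)).congr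
      fun t ht ↦ ?_
    rw [Set.uIoc_of_le hx.le] at ht
    simp only [Real.rpow_mul ht.1.le, Real.rpow_two]
  have hexp : Continuous fun t : ℝ ↦ Real.exp (-(1 / 2) * (t ^ 2 / σ ^ 2) ^ (2 * μ - 1)) := by
    have : Continuous fun t : ℝ ↦ (t ^ 2 / σ ^ 2) ^ (2 * μ - 1) :=
      Continuous.rpow_const (by fun_prop) fun _ ↦ Or.inr (by linarith)
    fun_prop
  exact (hpow.const_mul _).mul_continuousOn hexp.continuousOn

end Density

section Edges

variable {V P : Type*} [AddCommGroup V] [Module ℝ V] [AddTorsor V P]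

/-- The point with parameter `t ∈ [-1, 1]` on the segment between `q` (at `t = -1`) and `p`
(at `t = 1`); it extends `edgeParam` to arbitrary real affine spaces. -/
noncomputable def edgePoint (p q : P) (t : ℝ) : P := AffineMap.lineMap q p ((1 + t) / 2)

theorem edgeParam_eq_edgePoint (v : Fin 3 → ℝ × ℝ) (j : Fin 3) (t : ℝ) :
    edgeParam v j t = edgePoint (v (j + 1)) (v (j + 2)) t := by
  rw [edgeParam, edgePoint, AffineMap.lineMap_apply_module]
  module

theorem affineMap_edgePoint (A : P →ᵃ[ℝ] ℝ) (p q : P) (t : ℝ) :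
    A (edgePoint p q t) = (1 + t) / 2 * A p + (1 - t) / 2 * A q := by
  rw [edgePoint, AffineMap.apply_lineMap, AffineMap.lineMap_apply_module, smul_eq_mul, smul_eq_mul]
  ring

/-- The quadratic function `Σ aᵢ λᵢ + Σ bᵢ λᵢ²` attached to a family of functions `λᵢ`. -/
def quadCombination {ι X : Type*} [Fintype ι] (a b : ι → ℝ) (lam : ι → X → ℝ) (x : X) : ℝ :=
  ∑ i, a i * lam i x + ∑ i, b i * lam i x ^ 2

variable {ι : Type*} [Fintype ι] [DecidableEq ι] {v : ι → P} {lam : ι → P →ᵃ[ℝ] ℝ} {i j : ι}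

theorem quadCombination_edgePoint (hlam : ∀ i j, lam i (v j) = if i = j then 1 else 0)
    (hij : i ≠ j) (a b : ι → ℝ) (t : ℝ) :
    quadCombination a b (fun i ↦ lam i) (edgePoint (v i) (v j) t) =
      ((a i + a j) / 2 + (b i + b j) / 4) + ((a i - a j) / 2 + (b i - b j) / 2) * t
        + ((b i + b j) / 4) * t ^ 2 := by
  have hi : lam i (edgePoint (v i) (v j) t) = (1 + t) / 2 := by
    simp [affineMap_edgePoint, hlam, hij]
  have hj : lam j (edgePoint (v i) (v j) t) = (1 - t) / 2 := by
    simp [affineMap_edgePoint, hlam, hij.symm]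
  have hk (k : ι) (hk : k ≠ i ∧ k ≠ j) : lam k (edgePoint (v i) (v j) t) = 0 := by
    simp [affineMap_edgePoint, hlam, hk]
  rw [quadCombination, Fintype.sum_eq_add i j hij fun k hkij ↦ by simp [hk k hkij],
    Fintype.sum_eq_add i j hij fun k hkij ↦ by simp [hk k hkij], hi, hj]
  ring

theorem edge_coeff_sums_eq_zero (hlam : ∀ i j, lam i (v j) = if i = j then 1 else 0)
    (hij : i ≠ j) {w : ℝ → ℝ} (hw : IntervalIntegrable w volume (-1) 1) (hw_even : w.Even)
    (hw_pos : ∀ᵐ t, t ∈ Set.Icc (-1) 1 → 0 < w t) {c : ℝ} {a b : ι → ℝ}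
    (hD : ∫ t in (-1)..1,
      quadCombination a b (fun i ↦ lam i) (edgePoint (v i) (v j) t) * w t = 0)
    (hS : ∫ t in (-1)..1, (t ^ 2 - c) *
      quadCombination a b (fun i ↦ lam i) (edgePoint (v i) (v j) t) * w t = 0) :
    a i + a j = 0 ∧ b i + b j = 0 := by
  simp only [quadCombination_edgePoint hlam hij] at hD hS
  obtain ⟨hα, hβ⟩ := even_coeffs_eq_zero_of_integrals_eq_zero one_pos hw hw_even hw_pos hD hS
  exact ⟨by linarith, by linarith⟩

end Edges

theorem eq_zero_of_cyclic_add_eq_zero {M : Type*} [AddCommGroup M] [IsAddTorsionFree M]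
    {x : Fin 3 → M} (h : ∀ j, x (j + 1) + x (j + 2) = 0) : x = 0 := by
  have h₀ : x 1 + x 2 = 0 := h 0
  have h₁ : x 2 + x 0 = 0 := h 1
  have h₂ : x 0 + x 1 = 0 := h 2
  have h₀₁ : x 0 = x 1 := by
    rw [eq_neg_of_add_eq_zero_right h₁, eq_neg_of_add_eq_zero_left h₀]
  have hx₁ : x 1 = 0 := by simpa [h₀₁, ← two_nsmul] using h₂
  ext j
  fin_cases j <;> simp_all

theorem unisolvent_second_family_general {V P : Type*} [AddCommGroup V] [Module ℝ V]
    [AddTorsor V P] {v : Fin 3 → P} {lam : Fin 3 → P →ᵃ[ℝ] ℝ}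
    (hlam : ∀ i j, lam i (v j) = if i = j then 1 else 0)
    {w : ℝ → ℝ} (hw : IntervalIntegrable w volume (-1) 1) (hw_even : w.Even)
    (hw_pos : ∀ᵐ t, t ∈ Set.Icc (-1) 1 → 0 < w t) {c : ℝ} {a b : Fin 3 → ℝ}
    (hD : ∀ j, ∫ t in (-1)..1,
      quadCombination a b (fun i ↦ lam i) (edgePoint (v (j + 1)) (v (j + 2)) t) * w t = 0)
    (hS : ∀ j, ∫ t in (-1)..1, (t ^ 2 - c) *
      quadCombination a b (fun i ↦ lam i) (edgePoint (v (j + 1)) (v (j + 2)) t) * w t = 0) :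
    a = 0 ∧ b = 0 := by
  have hedge (j : Fin 3) : a (j + 1) + a (j + 2) = 0 ∧ b (j + 1) + b (j + 2) = 0 :=
    edge_coeff_sums_eq_zero hlam (by simp) hw hw_even hw_pos (hD j) (hS j)
  exact ⟨eq_zero_of_cyclic_add_eq_zero fun j ↦ (hedge j).1,
    eq_zero_of_cyclic_add_eq_zero fun j ↦ (hedge j).2⟩

/-- Unisolvency of the second enriched triple: if a quadratic
`p₂ = Σ aᵢ λᵢ + Σ bᵢ λᵢ²` is annihilated by all the six enriched edge functionals,
then all its coefficients vanish and `p₂ = 0`. -/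
theorem unisolvent_second_family (v : Fin 3 → ℝ × ℝ) (hv : AffineIndependent ℝ v)
    (lam : Fin 3 → ℝ × ℝ → ℝ)
    (hlam : ∀ i, ∃ A : (ℝ × ℝ) →ᵃ[ℝ] ℝ, ∀ x, lam i x = A x)
    (hkr : ∀ i j, lam i (v j) = if i = j then (1:ℝ) else 0)
    (σ μ : ℝ) (hσ : 0 < σ) (hμ : 1 ≤ μ)
    (a b : Fin 3 → ℝ)
    (hD : ∀ j : Fin 3,
      ∫ t in (-1:ℝ)..1,
        ((∑ i : Fin 3, a i * lam i (edgeParam v j t))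
          + ∑ i : Fin 3, b i * (lam i (edgeParam v j t)) ^ 2) * gTilde σ μ t = 0)
    (hS : ∀ j : Fin 3,
      ∫ t in (-1:ℝ)..1,
        qPoly σ μ t *
          ((∑ i : Fin 3, a i * lam i (edgeParam v j t))
            + ∑ i : Fin 3, b i * (lam i (edgeParam v j t)) ^ 2) * gTilde σ μ t = 0) :
    (∀ i, a i = 0) ∧ (∀ i, b i = 0) ∧
      ∀ x : ℝ × ℝ, (∑ i : Fin 3, a i * lam i x) + ∑ i : Fin 3, b i * (lam i x) ^ 2 = 0 := by
  choose A hA using hlam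
  obtain rfl : lam = fun i ↦ ⇑(A i) := funext₂ hA
  have hμ' : 1 / 2 < μ := by linarith
  have hw_pos : ∀ᵐ t, t ∈ Set.Icc (-1) 1 → 0 < gTilde σ μ t := by
    filter_upwards [Measure.ae_ne volume 0] with t ht _ using gTilde_pos hσ hμ' ht
  simp only [edgeParam_eq_edgePoint] at hD hS
  obtain ⟨rfl, rfl⟩ := unisolvent_second_family_general hkr
    (intervalIntegrable_gTilde hμ' _ _) gTilde_even hw_pos hD hS
  simp
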